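/- arXiv:1710.06694 — 2 statements merged into one kernel-verified Lean document; each statement's English description precedes it below -/
import Mathlib

section
/- Let (W,T) be a finite dual Coxeter system of rank n and let w ∈ W with ℓ_T(w) = n. Then t ≤_T w for every reflection t ∈ T; equivalently, for every t ∈ T there exists a reduced reflection factorization of w beginning with t. -/
section Hurwitz

variable {G : Type*} [Group G]

/-- One Hurwitz move: replace two adjacent entries `(a, b)` by `(a * b * a⁻¹, a)`. -/
def HurwitzMove (l l' : List G) : Prop :=
  ∃ (u v : List G) (a b : G),
    l = u ++ a :: b :: v ∧ l' = u ++ (a * b * a⁻¹) :: a :: v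

/-- Hurwitz equivalence: two tuples are Hurwitz equivalent iff they lie in the same
orbit of the Hurwitz action of the braid group. -/
def HurwitzEquiv (l l' : List G) : Prop := Relation.EqvGen HurwitzMove l l'

/-- The reflection length `ℓ_T(w)` of `w` with respect to a generating set `T`. -/
noncomputable def reflLength (T : Set G) (w : G) : ℕ :=
  sInf {k | ∃ l : List G, (∀ t ∈ l, t ∈ T) ∧ l.prod = w ∧ l.length = k}

/-- `l` is a reduced `T`-factorization of `w`, i.e. an element of `Red_T(w)`. -/
def IsRedFac (T : Set G) (w : G) (l : List G) : Prop :=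
  (∀ t ∈ l, t ∈ T) ∧ l.prod = w ∧ l.length = reflLength T w

end Hurwitz


section DualCox

variable {W : Type*} [Group W]

/-- `(W,T)` is a dual Coxeter system: `T` is the set of reflections of some
Coxeter system on `W`. -/
def IsDualCoxeterSystem (W : Type*) [Group W] (T : Set W) : Prop :=
  ∃ (B : Type) (M : CoxeterMatrix B) (cs : CoxeterSystem M W),
    T = {t | cs.IsReflection t}

/-- `(W,T)` is a dual Coxeter system of rank `n`. -/
def IsDualCoxeterSystemOfRank (W : Type*) [Group W] (T : Set W) (n : ℕ) : Prop :=
  ∃ (B : Type) (M : CoxeterMatrix B) (cs : CoxeterSystem M W),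
    Nat.card B = n ∧ T = {t | cs.IsReflection t}

/-- `S ⊆ T` is a simple system for the dual Coxeter system `(W,T)`. -/
def IsSimpleSystem (T S : Set W) : Prop :=
  ∃ (B : Type) (M : CoxeterMatrix B) (cs : CoxeterSystem M W),
    S = Set.range cs.simple ∧ T = {t | cs.IsReflection t}

end DualCox


namespace CoxGeom

open CoxeterSystem

variable {B : Type} (M : CoxeterMatrix B)

/-- The linear functional of the geometric representation attached to `i`. -/
noncomputable def fn (i : B) : (B →₀ ℝ) →ₗ[ℝ] ℝ :=
  Finsupp.linearCombination ℝ (fun j => -2 * Real.cos (Real.pi / (M i j : ℝ)))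

/-- The simple root. -/
noncomputable def rt (i : B) : B →₀ ℝ := Finsupp.single i 1

/-- The simple reflection of the geometric representation. -/
noncomputable def rf (i : B) : Module.End ℝ (B →₀ ℝ) :=
  LinearMap.id - (fn M i).smulRight (rt i)

lemma rf_apply (i : B) (v : B →₀ ℝ) : rf M i v = v - fn M i v • rt i := by
  simp [rf]

lemma fn_rt (i j : B) : fn M i (rt j) = -2 * Real.cos (Real.pi / (M i j : ℝ)) := by
  simp [fn, rt]

lemma fn_rt_self (i : B) : fn M i (rt i) = 2 := by
  simp [fn_rt]

lemma fn_rt_symm (i j : B) : fn M j (rt i) = fn M i (rt j) := by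
  rw [fn_rt, fn_rt, M.symmetric]

lemma rf_rt_self (i : B) : rf M i (rt i) = - rt i := by
  rw [rf_apply, fn_rt_self]; module

lemma rf_mul_self (i : B) : rf M i * rf M i = 1 := by
  refine LinearMap.ext fun v => ?_
  simp only [Module.End.mul_apply, rf_apply, map_sub, map_smul, fn_rt_self,
    Module.End.one_apply, smul_eq_mul]
  module

lemma pow_rt_left (i j : B) (k : ℕ) :
    Real.sin (Real.pi / (M i j : ℝ)) • ((rf M i * rf M j) ^ k) (rt i) =
      Real.sin ((2 * k + 1) * (Real.pi / (M i j : ℝ))) • rt i +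
        Real.sin (2 * k * (Real.pi / (M i j : ℝ))) • rt j := by
  induction k with
  | zero => simp
  | succ k ih =>
    rw [pow_succ', Module.End.mul_apply, ← map_smul, ih]
    simp only [Module.End.mul_apply, rf_apply, map_sub, map_smul, map_add, fn_rt_self,
      fn_rt_symm M i j, fn_rt M i j, smul_eq_mul]
    set θ := Real.pi / (M i j : ℝ)
    have h1 : Real.sin (2 * ((k + 1 : ℕ) : ℝ) * θ) =
        2 * Real.cos θ * Real.sin ((2 * k + 1) * θ) - Real.sin (2 * k * θ) := by
      have e1 : 2 * ((k + 1 : ℕ) : ℝ) * θ = (2 * k + 1) * θ + θ := by push_cast; ring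
      have e2 : 2 * (k : ℝ) * θ = (2 * k + 1) * θ - θ := by ring
      rw [e1, e2, Real.sin_add, Real.sin_sub]; ring
    have h2 : Real.sin ((2 * ((k + 1 : ℕ) : ℝ) + 1) * θ) =
        2 * Real.cos θ * Real.sin (2 * ((k + 1 : ℕ) : ℝ) * θ) - Real.sin ((2 * k + 1) * θ) := by
      have e1 : (2 * ((k + 1 : ℕ) : ℝ) + 1) * θ = 2 * ((k + 1 : ℕ) : ℝ) * θ + θ := by
        push_cast; ring
      have e2 : (2 * (k : ℝ) + 1) * θ = 2 * ((k + 1 : ℕ) : ℝ) * θ - θ := by push_cast; ring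
      rw [e1, e2, Real.sin_add, Real.sin_sub]; ring
    rw [h2, h1]
    module

lemma pow_rt_right (i j : B) (k : ℕ) :
    Real.sin (Real.pi / (M i j : ℝ)) • ((rf M i * rf M j) ^ k) (rt j) =
      -Real.sin (2 * k * (Real.pi / (M i j : ℝ))) • rt i -
        Real.sin ((2 * k - 1) * (Real.pi / (M i j : ℝ))) • rt j := by
  induction k with
  | zero => simp
  | succ k ih =>
    rw [pow_succ', Module.End.mul_apply, ← map_smul, ih]
    simp only [Module.End.mul_apply, rf_apply, map_sub, map_smul, map_add, fn_rt_self,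
      fn_rt_symm M i j, fn_rt M i j, smul_eq_mul]
    set θ := Real.pi / (M i j : ℝ)
    have h1 : Real.sin ((2 * ((k + 1 : ℕ) : ℝ) - 1) * θ) =
        2 * Real.cos θ * Real.sin (2 * k * θ) - Real.sin ((2 * k - 1) * θ) := by
      have e1 : (2 * ((k + 1 : ℕ) : ℝ) - 1) * θ = 2 * k * θ + θ := by push_cast; ring
      have e2 : (2 * (k : ℝ) - 1) * θ = 2 * k * θ - θ := by ring
      rw [e1, e2, Real.sin_add, Real.sin_sub]; ring
    have h2 : Real.sin (2 * ((k + 1 : ℕ) : ℝ) * θ) =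
        2 * Real.cos θ * Real.sin ((2 * ((k + 1 : ℕ) : ℝ) - 1) * θ) - Real.sin (2 * k * θ) := by
      have e1 : 2 * ((k + 1 : ℕ) : ℝ) * θ = (2 * ((k + 1 : ℕ) : ℝ) - 1) * θ + θ := by ring
      have e2 : 2 * (k : ℝ) * θ = (2 * ((k + 1 : ℕ) : ℝ) - 1) * θ - θ := by push_cast; ring
      rw [e1, e2, Real.sin_add, Real.sin_sub]; ring
    rw [h2, h1]
    module

lemma sin_pos_of (i j : B) (hij : i ≠ j) (h0 : M i j ≠ 0) :
    0 < Real.sin (Real.pi / (M i j : ℝ)) := by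
  have h1 : M i j ≠ 1 := M.off_diagonal i j hij
  have h2 : (1 : ℝ) < (M i j : ℝ) := by
    have : 1 < M i j := by omega
    exact_mod_cast this
  apply Real.sin_pos_of_pos_of_lt_pi
  · have := Real.pi_pos; positivity
  · exact div_lt_self Real.pi_pos h2

lemma liftable : M.IsLiftable (rf M) := by
  intro i j
  by_cases hij : i = j
  · subst hij
    rw [rf_mul_self, one_pow]
  by_cases h0 : M i j = 0
  · rw [h0, pow_zero]
  have hs := sin_pos_of M i j hij h0
  have hm : (M i j : ℝ) ≠ 0 := by exact_mod_cast h0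
  have hi := pow_rt_left M i j (M i j)
  have hj := pow_rt_right M i j (M i j)
  have e0 : 2 * (M i j : ℝ) * (Real.pi / (M i j : ℝ)) = 2 * Real.pi := by field_simp
  rw [add_mul, e0, one_mul, add_comm (2 * Real.pi), Real.sin_add_two_pi, Real.sin_two_pi,
    zero_smul, add_zero] at hi
  rw [sub_mul, e0, one_mul, Real.sin_two_pi_sub, Real.sin_two_pi, neg_zero, zero_smul, zero_sub,
    neg_smul, neg_neg] at hj
  have hi' : ((rf M i * rf M j) ^ (M i j)) (rt i) = rt i := smul_right_injective (B →₀ ℝ) hs.ne' hi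
  have hj' : ((rf M i * rf M j) ^ (M i j)) (rt j) = rt j := smul_right_injective (B →₀ ℝ) hs.ne' hj
  have hc : Real.sin (Real.pi / (M i j : ℝ)) ^ 2 = 1 - Real.cos (Real.pi / (M i j : ℝ)) ^ 2 :=
    Real.sin_sq _
  refine LinearMap.ext fun z => ?_
  set s := Real.sin (Real.pi / (M i j : ℝ)) with hsdef
  set c := Real.cos (Real.pi / (M i j : ℝ)) with hcdef
  set p := (2 * s ^ 2)⁻¹ * (fn M i z + c * fn M j z)
  set q := (2 * s ^ 2)⁻¹ * (c * fn M i z + fn M j z)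
  set u := z - p • rt i - q • rt j with hu
  have hij2 : fn M i (rt j) = -2 * c := fn_rt M i j
  have hui : fn M i u = 0 := by
    simp only [hu, map_sub, map_smul, fn_rt_self, hij2, smul_eq_mul]
    simp only [p, q]
    field_simp
    rw [hc]; ring
  have huj : fn M j u = 0 := by
    simp only [hu, map_sub, map_smul, fn_rt_self, fn_rt_symm M i j, hij2, smul_eq_mul]
    simp only [p, q]
    field_simp
    rw [hc]; ring
  have hfix : ∀ k : ℕ, ((rf M i * rf M j) ^ k) u = u := by
    intro k
    induction k with
    | zero => simp
    | succ k ih =>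
      rw [pow_succ', Module.End.mul_apply, ih, Module.End.mul_apply, rf_apply M j, huj, zero_smul,
        sub_zero, rf_apply, hui, zero_smul, sub_zero]
  have hz : z = u + p • rt i + q • rt j := by rw [hu]; module
  rw [hz, map_add, map_add, map_smul, map_smul, hfix, hi', hj']
  simp

lemma alt_rt (i j : B) (a : ℕ → ℝ) (h0 : a 0 = 0) (h1 : a 1 = 1)
    (ha : ∀ k, a (k + 2) = 2 * Real.cos (Real.pi / (M i j : ℝ)) * a (k + 1) - a k) (k : ℕ) :
    ((alternatingWord i j k).map (rf M)).prod (rt i) =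
      if Even k then a (k + 1) • rt i + a k • rt j else a k • rt i + a (k + 1) • rt j := by
  induction k with
  | zero => simp [alternatingWord, h0, h1]
  | succ k ih =>
    rw [alternatingWord_succ', List.map_cons, List.prod_cons, Module.End.mul_apply, ih]
    by_cases hk : Even k
    · have hk' : ¬ Even (k + 1) := by simp [hk, Nat.even_add_one]
      simp only [hk, hk', if_true, if_false, rf_apply, map_add, map_smul, fn_rt_self,
        fn_rt_symm M i j, fn_rt M i j, smul_eq_mul, ha]
      module
    · have hk' : Even (k + 1) := by simpa [Nat.even_add_one] using hk
      simp only [hk, hk', if_true, if_false, rf_apply, map_add, map_smul, fn_rt_self,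
        fn_rt M i j, smul_eq_mul, ha]
      module

/-- Nonnegativity of the coefficients in the dihedral computation. -/
lemma alt_rt_nonneg (i j : B) (hij : i ≠ j) (k : ℕ) (hk : M i j = 0 ∨ k < M i j) :
    ∃ p q : ℝ, 0 ≤ p ∧ 0 ≤ q ∧
      ((alternatingWord i j k).map (rf M)).prod (rt i) = p • rt i + q • rt j := by
  have key : ∃ a : ℕ → ℝ, a 0 = 0 ∧ a 1 = 1 ∧
      (∀ k, a (k + 2) = 2 * Real.cos (Real.pi / (M i j : ℝ)) * a (k + 1) - a k) ∧
      0 ≤ a k ∧ 0 ≤ a (k + 1) := by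
    by_cases h0 : M i j = 0
    · refine ⟨fun k => k, by simp, by simp, ?_, by positivity, by positivity⟩
      intro k
      simp [h0]; ring
    · have hs := sin_pos_of M i j hij h0
      have hk' : k < M i j := by tauto
      have hm : (0 : ℝ) < (M i j : ℝ) := by exact_mod_cast Nat.pos_of_ne_zero h0
      have hnn : ∀ l : ℕ, l ≤ M i j → 0 ≤ Real.sin (l * (Real.pi / (M i j : ℝ))) := by
        intro l hl
        have hl' : (l : ℝ) ≤ (M i j : ℝ) := by exact_mod_cast hl
        have hpi := Real.pi_pos
        apply Real.sin_nonneg_of_nonneg_of_le_pi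
        · positivity
        · rw [← mul_div_assoc, div_le_iff₀ hm]
          nlinarith
      refine ⟨fun k => Real.sin (k * (Real.pi / (M i j : ℝ))) / Real.sin (Real.pi / (M i j : ℝ)),
        by simp, by simp [hs.ne'], ?_, div_nonneg (hnn _ hk'.le) hs.le,
        div_nonneg (hnn _ hk') hs.le⟩
      intro k
      set θ := Real.pi / (M i j : ℝ)
      have e1 : ((k + 2 : ℕ) : ℝ) * θ = ((k + 1 : ℕ) : ℝ) * θ + θ := by push_cast; ring
      have e2 : (k : ℝ) * θ = ((k + 1 : ℕ) : ℝ) * θ - θ := by push_cast; ring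
      simp only []
      rw [e1, e2, Real.sin_add, Real.sin_sub]; ring
  obtain ⟨a, a0, a1, ha, hk0, hk1⟩ := key
  have := alt_rt M i j a a0 a1 ha k
  by_cases hev : Even k
  · exact ⟨_, _, hk1, hk0, by rw [this, if_pos hev]⟩
  · exact ⟨_, _, hk0, hk1, by rw [this, if_neg hev]⟩

variable {M} {W : Type*} [Group W] (cs : CoxeterSystem M W)

/-- The geometric representation. -/
noncomputable def rep : W →* Module.End ℝ (B →₀ ℝ) := cs.lift ⟨rf M, liftable M⟩

lemma rep_simple (i : B) : rep cs (cs.simple i) = rf M i := cs.lift_apply_simple _ i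

lemma rep_wordProd (l : List B) : rep cs (cs.wordProd l) = (l.map (rf M)).prod := by
  induction l with
  | nil => simp
  | cons i l ih => rw [cs.wordProd_cons, map_mul, ih, rep_simple]; simp

lemma rep_inv_apply (w : W) (v : B →₀ ℝ) : rep cs w⁻¹ (rep cs w v) = v := by
  rw [← Module.End.mul_apply, ← map_mul]; simp

lemma rep_apply_inv (w : W) (v : B →₀ ℝ) : rep cs w (rep cs w⁻¹ v) = v := by
  rw [← Module.End.mul_apply, ← map_mul]; simp

lemma simple_injective : Function.Injective cs.simple := by
  intro i j h
  by_contra hij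
  have h1 : rf M i (rt i) = rf M j (rt i) := by rw [← rep_simple cs, ← rep_simple cs, h]
  rw [rf_rt_self, rf_apply] at h1
  have h2 := DFunLike.congr_fun h1 i
  simp [rt, Finsupp.single_apply, Ne.symm hij] at h2
  norm_num at h2

/-- Positivity of roots. -/
lemma root_nonneg (N : ℕ) : ∀ (w : W) (i : B), cs.length w = N →
    cs.length w < cs.length (w * cs.simple i) → ∀ b, 0 ≤ rep cs w (rt i) b := by
  induction N using Nat.strong_induction_on with
  | _ N ih =>
  intro w i hN hi b
  classical
  by_cases hw1 : w = 1
  · subst hw1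
    simp only [map_one, Module.End.one_apply, rt]
    rw [Finsupp.single_apply]; split_ifs <;> norm_num
  obtain ⟨j, hj⟩ := cs.exists_rightDescent_of_ne_one hw1
  rw [CoxeterSystem.isRightDescent_iff] at hj
  have hij : i ≠ j := by rintro rfl; omega
  -- the maximal dihedral suffix
  let P : ℕ → Prop := fun k => ∃ v : W, w = v * cs.wordProd (alternatingWord i j k) ∧
    cs.length v + k = cs.length w
  have hP1 : P 1 := ⟨w * cs.simple j, by simp [alternatingWord], hj⟩
  have hPb : ∀ k, P k → k ≤ cs.length w := by rintro k ⟨v, -, h⟩; omega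
  obtain ⟨k, hk1, hPk, hmax⟩ : ∃ k, 1 ≤ k ∧ P k ∧ ¬ P (k + 1) := by
    refine ⟨Nat.findGreatest P (cs.length w), Nat.le_findGreatest (hPb 1 hP1) hP1,
      Nat.findGreatest_spec (hPb 1 hP1) hP1, fun h => ?_⟩
    have := Nat.le_findGreatest (hPb _ h) h
    omega
  obtain ⟨v, hwv, hlv⟩ := hPk
  -- both simple letters go up from `v`
  have hup1 : cs.length v < cs.length (v * cs.simple (if Even k then j else i)) := by
    rcases cs.length_mul_simple v (if Even k then j else i) with h | h
    · omega
    · exfalso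
      apply hmax
      refine ⟨v * cs.simple (if Even k then j else i), ?_, by omega⟩
      rw [alternatingWord_succ', cs.wordProd_cons, hwv]
      simp [mul_assoc]
  have hup2 : cs.length v < cs.length (v * cs.simple (if Even k then i else j)) := by
    rcases cs.length_mul_simple v (if Even k then i else j) with h | h
    · omega
    · exfalso
      obtain ⟨k', rfl⟩ : ∃ k', k = k' + 1 := ⟨k - 1, by omega⟩
      have hlet : (if Even (k' + 1) then i else j) = (if Even k' then j else i) := by
        by_cases he : Even k' <;> simp [he, Nat.even_add_one]
      rw [hlet] at h
      have hw' : w = v * cs.simple (if Even k' then j else i) *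
          cs.wordProd (alternatingWord i j k') := by
        rw [hwv, alternatingWord_succ', cs.wordProd_cons, mul_assoc]
      have h1 := cs.length_mul_le (v * cs.simple (if Even k' then j else i))
        (cs.wordProd (alternatingWord i j k'))
      rw [← hw'] at h1
      have h2 := cs.length_wordProd_le (alternatingWord i j k')
      rw [length_alternatingWord] at h2
      omega
  have hvi : cs.length v < cs.length (v * cs.simple i) := by
    by_cases he : Even k
    · simpa [he] using hup2
    · simpa [he] using hup1
  have hvj : cs.length v < cs.length (v * cs.simple j) := by
    by_cases he : Even k
    · simpa [he] using hup1
    · simpa [he] using hup2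
  have hpi := ih (cs.length v) (by omega) v i rfl hvi b
  have hpj := ih (cs.length v) (by omega) v j rfl hvj b
  -- `k` is less than the order
  have hkM : M i j = 0 ∨ k < M i j := by
    by_contra hcon
    push Not at hcon
    obtain ⟨hM0, hMk⟩ := hcon
    -- split off a braid word
    have hsplit : ∀ d, d + M i j ≤ k → P (k - d) := by
      intro d
      induction d with
      | zero => intro _; exact ⟨v, hwv, hlv⟩
      | succ d ihd =>
        intro hd
        obtain ⟨x, hx, hlx⟩ := ihd (by omega)
        obtain ⟨k', hk'⟩ : ∃ k', k - d = k' + 1 := ⟨k - d - 1, by omega⟩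
        have hk'' : k - (d + 1) = k' := by omega
        rw [hk''] 
        rw [hk'] at hx hlx
        have hx' : w = x * cs.simple (if Even k' then j else i) *
            cs.wordProd (alternatingWord i j k') := by
          rw [hx, alternatingWord_succ', cs.wordProd_cons, mul_assoc]
        refine ⟨_, hx', ?_⟩
        have h1 := cs.length_mul_le (x * cs.simple (if Even k' then j else i))
          (cs.wordProd (alternatingWord i j k'))
        rw [← hx'] at h1
        have h2 := cs.length_wordProd_le (alternatingWord i j k')
        rw [length_alternatingWord] at h2
        rcases cs.length_mul_simple x (if Even k' then j else i) with h | h <;> omega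
    obtain ⟨x, hx, hlx⟩ := hsplit (k - M i j) (by omega)
    have hkk : k - (k - M i j) = M i j := by omega
    rw [hkk] at hx hlx
    have hbr := cs.wordProd_braidWord_eq i j
    obtain ⟨m, hm⟩ : ∃ m, M i j = m + 1 := ⟨M i j - 1, by omega⟩
    rw [braidWord, braidWord, M.symmetric j i, hm, alternatingWord_succ j i,
      cs.wordProd_concat] at hbr
    rw [hm, hbr] at hx
    have hx' : w * cs.simple i = x * cs.wordProd (alternatingWord i j m) := by
      rw [hx]; simp [mul_assoc]
    have h1 := cs.length_mul_le x (cs.wordProd (alternatingWord i j m))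
    have h2 := cs.length_wordProd_le (alternatingWord i j m)
    rw [length_alternatingWord] at h2
    rw [hx'] at hi
    omega
  obtain ⟨p, q, hp, hq, hpq⟩ := alt_rt_nonneg M i j hij k hkM
  rw [hwv, map_mul, Module.End.mul_apply, rep_wordProd, hpq, map_add, map_smul, map_smul]
  simp only [Finsupp.add_apply, Finsupp.smul_apply, smul_eq_mul]
  positivity

/-- Negativity of roots at descents. -/
lemma root_nonpos (w : W) (i : B) (h : cs.IsRightDescent w i) (b : B) :
    rep cs w (rt i) b ≤ 0 := by
  rw [CoxeterSystem.isRightDescent_iff] at h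
  have h1 := root_nonneg cs _ (w * cs.simple i) i rfl (by simp; omega) b
  rw [map_mul, Module.End.mul_apply, rep_simple, rf_rt_self, map_neg] at h1
  simp only [Finsupp.neg_apply] at h1
  linarith

section Finite

variable [Fintype W] [Fintype B]

/-- The averaged invariant inner product. -/
noncomputable def ip (x y : B →₀ ℝ) : ℝ := ∑ w : W, ∑ b : B, rep cs w x b * rep cs w y b

lemma ip_symm (x y : B →₀ ℝ) : ip cs x y = ip cs y x := by
  simp only [ip, mul_comm]

lemma ip_sub_left (x y z : B →₀ ℝ) : ip cs (x - y) z = ip cs x z - ip cs y z := by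
  simp only [ip, map_sub, Finsupp.sub_apply, sub_mul, Finset.sum_sub_distrib]

lemma ip_add_left (x y z : B →₀ ℝ) : ip cs (x + y) z = ip cs x z + ip cs y z := by
  simp only [ip, map_add, Finsupp.add_apply, add_mul, Finset.sum_add_distrib]

lemma ip_smul_left (c : ℝ) (x z : B →₀ ℝ) : ip cs (c • x) z = c * ip cs x z := by
  simp only [ip, map_smul, Finsupp.smul_apply, smul_eq_mul, Finset.mul_sum, mul_assoc]

/-- The inner product against a fixed vector. -/
noncomputable def ipl (y : B →₀ ℝ) : (B →₀ ℝ) →ₗ[ℝ] ℝ where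
  toFun x := ip cs x y
  map_add' x z := ip_add_left cs x z y
  map_smul' c x := ip_smul_left cs c x y

lemma ip_inv (u : W) (x y : B →₀ ℝ) : ip cs (rep cs u x) (rep cs u y) = ip cs x y := by
  simp only [ip, ← Module.End.mul_apply, ← map_mul]
  exact Fintype.sum_equiv (Equiv.mulRight u) _ _ (fun w => rfl)

lemma ip_self_pos (x : B →₀ ℝ) (hx : x ≠ 0) : 0 < ip cs x x := by
  obtain ⟨b, hb⟩ := Finsupp.ne_iff.mp hx
  have hnn : ∀ w : W, 0 ≤ ∑ b : B, rep cs w x b * rep cs w x b :=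
    fun w => Finset.sum_nonneg fun b _ => mul_self_nonneg _
  refine Finset.sum_pos' (fun w _ => hnn w) ⟨1, Finset.mem_univ _, ?_⟩
  refine Finset.sum_pos' (fun b _ => mul_self_nonneg _) ⟨b, Finset.mem_univ _, ?_⟩
  simpa using hb

lemma ip_eq_zero (x : B →₀ ℝ) (h : ip cs x x = 0) : x = 0 := by
  by_contra hx
  exact (ip_self_pos cs x hx).ne' h

lemma rt_ne_zero (i : B) : rt i ≠ 0 := by simp [rt]

lemma fn_eq (i : B) (v : B →₀ ℝ) : 2 * ip cs v (rt i) = fn M i v * ip cs (rt i) (rt i) := by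
  have h := ip_inv cs (cs.simple i) v (rt i)
  rw [rep_simple, rf_rt_self, rf_apply, ip_sub_left, ip_smul_left, ip_symm cs v, ip_symm cs (rt i)]
    at h
  have e : ∀ y, ip cs (- rt i) y = - ip cs (rt i) y := by
    intro y
    have := ip_smul_left cs (-1) (rt i) y
    simpa using this
  rw [e, e, ip_symm cs (rt i) v] at h
  linarith

/-- A vector moved by all reflections has trivial stabilizer. -/
lemma free_orbit (x : B →₀ ℝ) (hx : ∀ t, cs.IsReflection t → rep cs t x ≠ x)
    (w : W) (hw : rep cs w x = x) : w = 1 := by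
  classical
  -- a vector `r` with positive pairing against all simple roots
  obtain ⟨r, hr⟩ : ∃ r : B →₀ ℝ, ∀ i, ip cs (rt i) r = 1 := by
    let φ : (B →₀ ℝ) →ₗ[ℝ] (B → ℝ) := LinearMap.pi fun i => ipl cs (rt i)
    have hinj : Function.Injective φ := by
      rw [← LinearMap.ker_eq_bot, LinearMap.ker_eq_bot']
      intro m hm
      apply ip_eq_zero cs
      have hm' : ∀ i, ip cs (rt i) m = 0 := fun i => by
        rw [ip_symm]; exact congrFun hm i
      have : ipl cs m = 0 := by
        ext i
        exact hm' i
      exact LinearMap.congr_fun this m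
    have hsurj : Function.Surjective φ :=
      (LinearMap.injective_iff_surjective_of_finrank_eq_finrank (by simp)).mp hinj
    obtain ⟨r, hr⟩ := hsurj (fun _ => 1)
    exact ⟨r, fun i => by rw [ip_symm]; exact congrFun hr i⟩
  obtain ⟨u, hu⟩ := Finite.exists_max (fun u : W => ip cs (rep cs u x) r)
  set y := rep cs u x with hy
  have hypos : ∀ i, 0 < ip cs (rt i) y := by
    intro i
    have h1 := hu (cs.simple i * u)
    simp only [map_mul, Module.End.mul_apply, rep_simple, ← hy] at h1
    rw [rf_apply, ip_sub_left, ip_smul_left, hr] at h1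
    have h2 := fn_eq cs i y
    have h3 := ip_self_pos cs (rt i) (rt_ne_zero i)
    have h4 : fn M i y ≠ 0 := by
      intro h0
      have h5 : rep cs (cs.simple i) y = y := by rw [rep_simple, rf_apply, h0]; simp
      apply hx (u⁻¹ * cs.simple i * u⁻¹⁻¹) ⟨u⁻¹, i, rfl⟩
      rw [map_mul, map_mul, Module.End.mul_apply, Module.End.mul_apply, inv_inv, ← hy, h5, hy,
        rep_inv_apply]
    have h5 : 0 < fn M i y := lt_of_le_of_ne (by linarith) h4.symm
    rw [ip_symm]
    nlinarith
  by_contra hw1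
  have hw' : u * w * u⁻¹ ≠ 1 := by
    intro h; apply hw1
    simpa using h
  obtain ⟨i, hi⟩ := cs.exists_rightDescent_of_ne_one hw'
  have hfix : rep cs (u * w * u⁻¹) y = y := by
    rw [map_mul, map_mul, Module.End.mul_apply, Module.End.mul_apply, hy, rep_inv_apply, hw]
  have h1 := ip_inv cs (u * w * u⁻¹) (rt i) y
  rw [hfix] at h1
  have hneg := root_nonpos cs _ i hi
  set z := rep cs (u * w * u⁻¹) (rt i)
  have hz : ip cs z y = ∑ b : B, z b * ip cs (rt b) y := by
    have e : z = ∑ b : B, z b • rt b := by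
      ext b
      simp [rt, Finsupp.finsetSum_apply, Finsupp.single_apply]
    have e2 : ipl cs y z = ipl cs y (∑ b : B, z b • rt b) := by rw [← e]
    rw [map_sum] at e2
    simpa [ipl, ip_smul_left] using e2
  have h2 : ip cs z y ≤ 0 := by
    rw [hz]
    exact Finset.sum_nonpos fun b _ => mul_nonpos_of_nonpos_of_nonneg (hneg b) (hypos b).le
  have := hypos i
  linarith

/-- The fixed space. -/
noncomputable def fixed (w : W) : Submodule ℝ (B →₀ ℝ) := LinearMap.ker (rep cs w - 1)

lemma mem_fixed (w : W) (x : B →₀ ℝ) : x ∈ fixed cs w ↔ rep cs w x = x := by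
  simp [fixed, sub_eq_zero]

lemma exists_refl (w : W) (hw : w ≠ 1) :
    ∃ t, cs.IsReflection t ∧ fixed cs w ≤ fixed cs t := by
  by_contra hcon
  push Not at hcon
  have key : ∃ x : fixed cs w, ∀ t, cs.IsReflection t → (x : B →₀ ℝ) ∉ fixed cs t := by
    by_contra hc
    push Not at hc
    let p : {t : W // cs.IsReflection t} → Subspace ℝ (fixed cs w) :=
      fun t => (fixed cs t.1).comap (fixed cs w).subtype
    obtain ⟨⟨t, ht⟩, htop⟩ := Subspace.exists_eq_top_of_iUnion_eq_univ
      (p := p) (by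
        rw [Set.eq_univ_iff_forall]
        intro x
        obtain ⟨t, ht, hxt⟩ := hc x
        exact Set.mem_iUnion.mpr ⟨⟨t, ht⟩, hxt⟩)
    apply hcon t ht
    exact Submodule.comap_subtype_eq_top.mp htop
  obtain ⟨x, hx⟩ := key
  exact hw (free_orbit cs x (fun t ht h => hx t ht ((mem_fixed cs t _).mpr h)) w
    ((mem_fixed cs w _).mp x.2))

lemma fixed_lt (w t : W) (ht : cs.IsReflection t) (h : fixed cs w ≤ fixed cs t) :
    fixed cs w < fixed cs (t * w) := by
  obtain ⟨u, i, rfl⟩ := ht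
  set t := u * cs.simple i * u⁻¹ with htdef
  set α := rep cs u (rt i) with hα
  have hα0 : α ≠ 0 := by
    intro h0
    apply rt_ne_zero i
    rw [← rep_inv_apply cs u (rt i), ← hα, h0, map_zero]
  have hαpos := ip_self_pos cs α hα0
  have htv : ∀ v, ∃ c : ℝ, rep cs t v = v - c • α ∧ 2 * ip cs v α = c * ip cs α α := by
    intro v
    refine ⟨fn M i (rep cs u⁻¹ v), ?_, ?_⟩
    · rw [htdef, map_mul, map_mul, Module.End.mul_apply, Module.End.mul_apply, rep_simple, rf_apply,
        map_sub, rep_apply_inv, map_smul]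
    · have := fn_eq cs i (rep cs u⁻¹ v)
      rw [← ip_inv cs u (rep cs u⁻¹ v), rep_apply_inv, ← ip_inv cs u (rt i)] at this
      exact this
  have hperp : ∀ x ∈ fixed cs w, ip cs x α = 0 := by
    intro x hx
    obtain ⟨c, hc1, hc2⟩ := htv x
    rw [(mem_fixed cs t x).mp (h hx)] at hc1
    have : c • α = 0 := by
      have := sub_eq_self.mp hc1.symm
      exact this
    rcases smul_eq_zero.mp this with h0 | h0
    · rw [h0] at hc2; linarith
    · exact absurd h0 hα0
  -- image and kernel are orthogonal
  have horth : ∀ v, ∀ x ∈ fixed cs w, ip cs ((rep cs w - 1) v) x = 0 := by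
    intro v x hx
    have h1 := ip_inv cs w v x
    rw [(mem_fixed cs w x).mp hx] at h1
    simp [ip_sub_left, h1]
  have hdisj : Disjoint (LinearMap.range (rep cs w - 1)) (fixed cs w) := by
    rw [Submodule.disjoint_def]
    rintro x ⟨v, hv⟩ hx
    apply ip_eq_zero cs
    have := horth v x hx
    rwa [hv] at this
  have htop := Submodule.eq_top_of_disjoint _ _
    (LinearMap.finrank_range_add_finrank_ker (rep cs w - 1)).ge hdisj
  have hαtop : α ∈ LinearMap.range (rep cs w - 1) ⊔ LinearMap.ker (rep cs w - 1) := by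
    have : α ∈ (⊤ : Submodule ℝ (B →₀ ℝ)) := Submodule.mem_top
    rwa [← htop] at this
  obtain ⟨a, ⟨v, hv⟩, f, hf, haf⟩ := Submodule.mem_sup.mp hαtop
  have hf0 : f = 0 := by
    apply ip_eq_zero cs
    have h1 := hperp f hf
    have h2 := horth v f hf
    rw [hv] at h2
    rw [← haf, ip_symm, ip_add_left, h2] at h1
    linarith
  rw [hf0, add_zero] at haf
  have hwv : rep cs w v = v + α := by
    rw [← haf, ← hv]; simp
  have hvt : v ∈ fixed cs (t * w) := by
    rw [mem_fixed, map_mul, Module.End.mul_apply]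
    obtain ⟨c, hc1, hc2⟩ := htv (rep cs w v)
    rw [hc1]
    have hn := ip_inv cs w v v
    rw [hwv] at hn hc2 ⊢
    rw [ip_add_left, ip_symm cs v, ip_symm cs α, ip_add_left, ip_add_left, ip_symm cs α v] at hn
    rw [ip_add_left] at hc2
    have hc : c = 1 := by
      have : (c - 1) * ip cs α α = 0 := by linarith
      rcases mul_eq_zero.mp this with h0 | h0
      · linarith
      · exact absurd h0 hαpos.ne'
    rw [hc]; module
  refine lt_of_le_of_ne ?_ ?_
  · intro x hx
    rw [mem_fixed, map_mul, Module.End.mul_apply, (mem_fixed cs w x).mp hx]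
    exact (mem_fixed cs t x).mp (h hx)
  · intro heq
    rw [← heq, mem_fixed, hwv] at hvt
    exact hα0 (by simpa using hvt)

end Finite

end CoxGeom

section ReflLen

variable {G : Type*} [Group G] {T : Set G}

lemma reflLength_le (l : List G) (hl : ∀ t ∈ l, t ∈ T) : reflLength T l.prod ≤ l.length :=
  Nat.sInf_le ⟨l, hl, rfl, rfl⟩

lemma exists_red (w : G) (h : ∃ l : List G, (∀ t ∈ l, t ∈ T) ∧ l.prod = w) :
    ∃ l : List G, (∀ t ∈ l, t ∈ T) ∧ l.prod = w ∧ l.length = reflLength T w := by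
  obtain ⟨l, h1, h2⟩ := h
  exact Nat.sInf_mem (s := {k | ∃ l : List G, (∀ t ∈ l, t ∈ T) ∧ l.prod = w ∧ l.length = k})
    ⟨l.length, l, h1, h2, rfl⟩

end ReflLen

namespace CoxGeom

variable {B : Type} {M : CoxeterMatrix B} {W : Type*} [Group W] (cs : CoxeterSystem M W)

lemma exists_fac [Fintype W] [Fintype B] (k : ℕ) : ∀ w : W,
    Fintype.card B ≤ Module.finrank ℝ (fixed cs w) + k →
    ∃ l : List W, (∀ t ∈ l, t ∈ {t | cs.IsReflection t}) ∧ l.prod = w ∧ l.length ≤ k := by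
  induction k with
  | zero =>
    intro w hw
    by_cases h1 : w = 1
    · exact ⟨[], by simp, by simp [h1], by simp⟩
    exfalso
    obtain ⟨t, ht, hle⟩ := exists_refl cs w h1
    have h2 := Submodule.finrank_lt_finrank_of_lt (fixed_lt cs w t ht hle)
    have h3 := Submodule.finrank_le (fixed cs (t * w))
    rw [Module.finrank_finsupp_self] at h3
    omega
  | succ k ih =>
    intro w hw
    by_cases h1 : w = 1
    · exact ⟨[], by simp, by simp [h1], by simp⟩
    obtain ⟨t, ht, hle⟩ := exists_refl cs w h1
    have h2 := Submodule.finrank_lt_finrank_of_lt (fixed_lt cs w t ht hle)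
    obtain ⟨l, hl, hp, hlen⟩ := ih (t * w) (by omega)
    refine ⟨t :: l, ?_, ?_, by simpa using hlen⟩
    · intro x hx
      rcases List.mem_cons.mp hx with rfl | hx
      · exact ht
      · exact hl x hx
    · rw [List.prod_cons, hp, ← mul_assoc, ht.mul_self, one_mul]

end CoxGeom

theorem statement_6 {W : Type*} [Group W] [Finite W] (T : Set W) (n : ℕ)
    (hT : IsDualCoxeterSystemOfRank W T n)
    (w : W) (hw : reflLength T w = n) (t : W) (ht : t ∈ T) :
    reflLength T t + reflLength T (t⁻¹ * w) = reflLength T w ∧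
    ∃ l : List W, IsRedFac T w (t :: l) := by
  obtain ⟨B, M, cs, hn, rfl⟩ := hT
  have ht' : cs.IsReflection t := ht
  have hfin : Finite B := Finite.of_injective _ (CoxGeom.simple_injective cs)
  have := Fintype.ofFinite B
  have := Fintype.ofFinite W
  rw [Nat.card_eq_fintype_card] at hn
  have hfr : ∀ w : W, Module.finrank ℝ (CoxGeom.fixed cs w) ≤ n := by
    intro w
    have h3 := Submodule.finrank_le (CoxGeom.fixed cs w)
    rwa [Module.finrank_finsupp_self, hn] at h3
  -- the fixed space of `w` is trivial
  have hfix : Module.finrank ℝ (CoxGeom.fixed cs w) = 0 := by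
    obtain ⟨l, hl, hp, hlen⟩ := CoxGeom.exists_fac cs
      (n - Module.finrank ℝ (CoxGeom.fixed cs w)) w (by omega)
    have h1 := reflLength_le l hl
    rw [hp, hw] at h1
    have := hfr w
    have hpos : 0 < n → Module.finrank ℝ (CoxGeom.fixed cs w) = 0 := fun _ => by omega
    omega
  have hbot : CoxGeom.fixed cs w = ⊥ := Submodule.finrank_eq_zero.mp hfix
  have hlt := Submodule.finrank_lt_finrank_of_lt
    (CoxGeom.fixed_lt cs w t ht' (by rw [hbot]; exact bot_le))
  obtain ⟨l, hl, hp, hlen⟩ := CoxGeom.exists_fac cs (n - 1) (t * w) (by omega)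
  have hnpos := hfr (t * w)
  have htw : t⁻¹ * w = t * w := by rw [ht'.inv]
  have hcons : ∀ l : List W, (∀ x ∈ l, x ∈ {t | cs.IsReflection t}) →
      ∀ x ∈ t :: l, x ∈ {t | cs.IsReflection t} := by
    intro l hl x hx
    rcases List.mem_cons.mp hx with rfl | hx
    · exact ht
    · exact hl x hx
  have hprod : (t :: l).prod = w := by
    rw [List.prod_cons, hp, ← mul_assoc, ht'.mul_self, one_mul]
  have hlen' : (t :: l).length = n := by
    have h1 := reflLength_le (t :: l) (hcons l hl)
    rw [hprod, hw] at h1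
    simp only [List.length_cons] at h1 ⊢
    omega
  refine ⟨?_, l, hcons l hl, hprod, by rw [hlen', hw]⟩
  have hlt1 : reflLength {t | cs.IsReflection t} t = 1 := by
    have h1 := reflLength_le (T := {t | cs.IsReflection t}) [t] (by simpa using ht')
    simp only [List.prod_singleton, List.length_singleton] at h1
    obtain ⟨l0, h01, h02, h03⟩ := exists_red (T := {t | cs.IsReflection t}) t
      ⟨[t], by simpa using ht', by simp⟩
    rcases Nat.eq_zero_or_pos (reflLength {t | cs.IsReflection t} t) with h0 | h0
    · exfalso
      rw [h0, List.length_eq_zero_iff] at h03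
      rw [h03, List.prod_nil] at h02
      have := ht'.odd_length
      rw [← h02] at this
      simp at this
    · omega
  rw [hlt1, htw, hw]
  have h1 := reflLength_le l hl
  rw [hp] at h1
  obtain ⟨l0, h01, h02, h03⟩ := exists_red (T := {t | cs.IsReflection t}) (t * w) ⟨l, hl, hp⟩
  have h4 := reflLength_le (t :: l0) (hcons l0 h01)
  rw [List.prod_cons, h02, ← mul_assoc, ht'.mul_self, one_mul, hw] at h4
  simp only [List.length_cons] at h4 hlen'
  omega
end

section
/- Let (W,T) be a dual Coxeter system, let t_1,…,t_n, t ∈ T, and let x ∈ ⟨t_1,…,t_n⟩. Then the tuples (t_1,…,t_n, t, t) and (t_1,…,t_n, xtx⁻¹, xtx⁻¹) are Hurwitz equivalent. -/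
section Helpers

variable {G : Type*} [Group G]

theorem HurwitzEquiv.step (u v : List G) (a b : G) :
    HurwitzEquiv (u ++ a :: b :: v) (u ++ (a * b * a⁻¹) :: a :: v) :=
  Relation.EqvGen.rel _ _ ⟨u, v, a, b, rfl, rfl⟩

theorem HurwitzEquiv.tr {l m k : List G} (h : HurwitzEquiv l m) (h' : HurwitzEquiv m k) :
    HurwitzEquiv l k := Relation.EqvGen.trans _ _ _ h h'

theorem HurwitzEquiv.sy {l m : List G} (h : HurwitzEquiv l m) :
    HurwitzEquiv m l := Relation.EqvGen.symm _ _ h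

/-- A pair `(r, r)` with `r * r = 1` commutes past any entry. -/
theorem hurwitz_pair_pass (u v : List G) (a r : G) (hr : r * r = 1) :
    HurwitzEquiv (u ++ r :: r :: a :: v) (u ++ a :: r :: r :: v) := by
  have h1 := HurwitzEquiv.step (u ++ [r]) v r a
  have h2 := HurwitzEquiv.step u (r :: v) r (r * a * r⁻¹)
  have e : r * (r * a * r⁻¹) * r⁻¹ = a := by
    have hi : r⁻¹ = r := inv_eq_of_mul_eq_one_left hr
    rw [hi]
    calc r * (r * a * r) * r = (r * r) * a * (r * r) := by group
      _ = a := by rw [hr]; simp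
  rw [e] at h2
  simp only [List.append_assoc, List.cons_append, List.nil_append] at h1
  exact h1.tr h2

theorem hurwitz_pair_pass_list (w : List G) (r : G) (hr : r * r = 1) : ∀ u : List G,
    HurwitzEquiv (u ++ r :: r :: w) (u ++ w ++ [r, r]) := by
  induction w with
  | nil => intro u; simpa [HurwitzEquiv] using Relation.EqvGen.refl _
  | cons a w ih =>
    intro u
    have h := ih (u ++ [a])
    simp only [List.append_assoc, List.cons_append, List.nil_append] at h ⊢
    exact (hurwitz_pair_pass u w a r hr).tr h

theorem conj_sq (a r : G) (hr : r * r = 1) : (a * r * a⁻¹) * (a * r * a⁻¹) = 1 := by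
  calc (a * r * a⁻¹) * (a * r * a⁻¹) = a * (r * r) * a⁻¹ := by group
    _ = 1 := by rw [hr]; simp

theorem hurwitz_pair_conj (u v : List G) (a r : G) (hr : r * r = 1) :
    HurwitzEquiv (u ++ a :: v ++ [r, r])
      (u ++ a :: v ++ [a * r * a⁻¹, a * r * a⁻¹]) := by
  have h0 := hurwitz_pair_pass_list v r hr (u ++ [a])
  have h1 := HurwitzEquiv.step u (r :: v) a r
  have h2 := HurwitzEquiv.step (u ++ [a * r * a⁻¹]) v a r
  have h3 := hurwitz_pair_pass_list (a :: v) (a * r * a⁻¹) (conj_sq a r hr) u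
  simp only [List.append_assoc, List.cons_append, List.nil_append] at h0 h1 h2 h3 ⊢
  exact h0.sy.tr (h1.tr (h2.tr h3))

theorem hurwitz_closure_conj (l : List G) (x : G) (hx : x ∈ Subgroup.closure {a | a ∈ l}) :
    ∀ r : G, r * r = 1 →
      HurwitzEquiv (l ++ [r, r]) (l ++ [x * r * x⁻¹, x * r * x⁻¹]) := by
  induction hx using Subgroup.closure_induction with
  | mem a ha =>
    intro r hr
    obtain ⟨u, v, rfl⟩ := List.append_of_mem ha
    exact hurwitz_pair_conj u v a r hr
  | one => intro r _; simpa [HurwitzEquiv] using Relation.EqvGen.refl _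
  | mul x y _ _ hx hy =>
    intro r hr
    have h := (hy r hr).tr (hx _ (conj_sq y r hr))
    have e : x * (y * r * y⁻¹) * x⁻¹ = x * y * r * (x * y)⁻¹ := by group
    rwa [e] at h
  | inv x _ hx =>
    intro r hr
    have h := (hx _ (conj_sq x⁻¹ r hr)).sy
    have e : x * (x⁻¹ * r * x⁻¹⁻¹) * x⁻¹ = r := by group
    rwa [e] at h

end Helpers

theorem statement_7 {W : Type*} [Group W] (T : Set W) (hT : IsDualCoxeterSystem W T)
    (n : ℕ) (t : Fin n → W) (ht : ∀ i, t i ∈ T) (r : W) (hr : r ∈ T)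
    (x : W) (hx : x ∈ Subgroup.closure (Set.range t)) :
    HurwitzEquiv (List.ofFn t ++ [r, r])
      (List.ofFn t ++ [x * r * x⁻¹, x * r * x⁻¹]) := by
  obtain ⟨B, M, cs, rfl⟩ := hT
  have hr2 : r * r = 1 := CoxeterSystem.IsReflection.mul_self hr
  refine hurwitz_closure_conj (List.ofFn t) x ?_ r hr2
  have e : {a | a ∈ List.ofFn t} = Set.range t := by
    ext a
    simp [List.mem_ofFn]
  rw [e]
  exact hx
end
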